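/- Let ξ ∈ C²(S¹;ℝ²) be a simple closed solution of the stationary equation ∂_s(σ∂_sξ) + ξ = 0 with |∂_s ξ| ≡ 1, σ > 0 solving ∂_{ss}σ − σ|∂_{ss}ξ|² = −1. If ∫₀¹ σ ds ≥ (27/32)·(1/(4π²)), then σ ≡ 1/(4π²) and ξ is the circle of radius 1/(2π) centered at the origin. -/

import Mathlib

open Real MeasureTheory intervalIntegral

noncomputable section

open Set Filter Topology Function

/-!
The vector `X = σ ∂ₛξ` satisfies `∂ₛ²X = -X / |X|`: it moves under an attractive central force of
unit magnitude, with distance `σ` to the centre and angular momentum `σ² k`, and `-ξ = ∂ₛX` is its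
hodograph.

If the polar angle of `X` gained more than `2π` over one period, then so would the direction of
`∂ₛX`. Since the distance is periodic, at some two times these directions would differ by exactly
`2π` while the distances agree; by conservation of energy the speeds agree as well, so `ξ` would
intersect itself. The total angle of a closed curve is a multiple of `2π`, so that of a simple one
is exactly `2π`.

The angle swept between consecutive critical points of `σ` lies strictly between `π / 2`, its
value for a linear force, and `π`, its value for an inverse square force: the conserved quantities
of these two motions become strictly monotone along `X`. A period contains an even number of such
intervals, two of which give less than `2π` and four of which give more. So `X` passes through an
equilibrium of the radial motion, where the effective potential is minimal, and `σ` is constant.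
-/

/-! ### Simple zeros -/

section Zeros

variable {g g' : ℝ → ℝ} {a b : ℝ}

lemma deriv_nonpos_of_pos_left {d : ℝ} (hg : HasDerivAt g d b) (hab : a < b) (hb : g b = 0)
    (hpos : ∀ x ∈ Ioo a b, 0 < g x) : d ≤ 0 := by
  have hslope : Tendsto (slope g b) (𝓝[<] b) (𝓝 d) :=
    (hasDerivAt_iff_tendsto_slope.1 hg).mono_left (nhdsWithin_mono b fun _ hx ↦ ne_of_lt hx)
  refine le_of_tendsto hslope ?_
  filter_upwards [Ioo_mem_nhdsLT hab] with x hx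
  rw [slope_def_field, hb, sub_zero]
  exact div_nonpos_of_nonneg_of_nonpos (hpos x hx).le (sub_nonpos.2 hx.2.le)

lemma deriv_nonneg_of_pos_right {d : ℝ} (hg : HasDerivAt g d a) (hab : a < b) (ha : g a = 0)
    (hpos : ∀ x ∈ Ioo a b, 0 < g x) : 0 ≤ d := by
  have hslope : Tendsto (slope g a) (𝓝[>] a) (𝓝 d) :=
    (hasDerivAt_iff_tendsto_slope.1 hg).mono_left (nhdsWithin_mono a fun _ hx ↦ ne_of_gt hx)
  refine ge_of_tendsto hslope ?_
  filter_upwards [Ioo_mem_nhdsGT hab] with x hx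
  rw [slope_def_field, ha, sub_zero]
  exact div_nonneg (hpos x hx).le (sub_nonneg.2 hx.1.le)

lemma exists_ne_zero_forall_mul_pos {s : Set ℝ} (hs : IsPreconnected s) (hg : ContinuousOn g s)
    (hne : ∀ x ∈ s, g x ≠ 0) : ∃ ε : ℝ, ε ≠ 0 ∧ ∀ x ∈ s, 0 < ε * g x := by
  by_cases hpos : ∃ x ∈ s, 0 < g x
  · obtain ⟨x, hx, hgx⟩ := hpos
    refine ⟨1, one_ne_zero, fun y hy ↦ ?_⟩
    by_contra! hgy
    obtain ⟨z, hz, hgz⟩ := hs.intermediate_value hy hx hg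
      (⟨by linarith, hgx.le⟩ : (0 : ℝ) ∈ Icc (g y) (g x))
    exact hne z hz hgz
  · push Not at hpos
    refine ⟨-1, by norm_num, fun y hy ↦ ?_⟩
    linarith [lt_of_le_of_ne (hpos y hy) (hne y hy)]

lemma exists_zero_between_of_deriv_mul_deriv_pos (hg : ∀ s, HasDerivAt g (g' s) s) (hab : a < b)
    (ha : g a = 0) (hb : g b = 0) (hd : 0 < g' a * g' b) : ∃ z ∈ Ioo a b, g z = 0 := by
  by_contra! hne
  obtain ⟨ε, hε, hpos⟩ := exists_ne_zero_forall_mul_pos isPreconnected_Ioo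
    (fun s _ ↦ (hg s).continuousAt.continuousWithinAt) hne
  have hda : 0 ≤ ε * g' a :=
    deriv_nonneg_of_pos_right ((hg a).const_mul ε) hab (by rw [ha, mul_zero]) hpos
  have hdb : ε * g' b ≤ 0 :=
    deriv_nonpos_of_pos_left ((hg b).const_mul ε) hab (by rw [hb, mul_zero]) hpos
  have : 0 < ε ^ 2 * (g' a * g' b) := by positivity
  linarith [mul_nonpos_of_nonneg_of_nonpos hda hdb]

lemma exists_next_zero (hg : ∀ s, HasDerivAt g (g' s) s) (hda : g' a ≠ 0) (hab : a < b)
    (hb : g b = 0) : ∃ z ∈ Ioc a b, g z = 0 ∧ ∀ x ∈ Ioo a z, g x ≠ 0 := by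
  have hcont : Continuous g := continuous_iff_continuousAt.2 fun s ↦ (hg s).continuousAt
  have hev : ∀ᶠ x in 𝓝[>] a, g x ≠ 0 :=
    ((hg a).eventually_ne hda).filter_mono (nhdsWithin_mono a fun _ hx ↦ ne_of_gt hx)
  obtain ⟨d, had, hd⟩ := mem_nhdsGT_iff_exists_Ioo_subset.1 hev
  have hdb : d ≤ b := le_of_not_gt fun hbd ↦ hd ⟨hab, hbd⟩ hb
  obtain ⟨z, ⟨hz, hgz⟩, hleast⟩ := (isCompact_Icc.inter_right
    (isClosed_singleton.preimage hcont)).exists_isLeast ⟨b, ⟨hdb, le_rfl⟩, hb⟩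
  refine ⟨z, ⟨had.trans_le hz.1, hz.2⟩, hgz, fun x hx hgx ↦ ?_⟩
  rcases lt_or_ge x d with hxd | hdx
  · exact hd ⟨hx.1, hxd⟩ hgx
  · exact hx.2.not_ge (hleast ⟨⟨hdx, hx.2.le.trans hz.2⟩, hgx⟩)

lemma exists_three_zeros_of_two_zeros (hg : ∀ s, HasDerivAt g (g' s) s)
    (hnd : ∀ s, g s = 0 → g' s ≠ 0) {x y : ℝ} (hax : a < x) (hxy : x < y) (hyb : y < b)
    (ha : g a = 0) (hx : g x = 0) (hy : g y = 0) (hb : g b = 0) (hd : 0 < g' a * g' b) :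
    ∃ z₁ z₂ z₃, a < z₁ ∧ z₁ < z₂ ∧ z₂ < z₃ ∧ z₃ < b ∧ g z₁ = 0 ∧ g z₂ = 0 ∧ g z₃ = 0 := by
  -- The signs of `g'` cannot alternate along `a, x, y, b`, so some consecutive pair agrees.
  have hx' := hnd x hx
  have hy' := hnd y hy
  have hprod : 0 < (g' a * g' x) * (g' x * g' y) * (g' y * g' b) := by
    have : (g' a * g' x) * (g' x * g' y) * (g' y * g' b) = (g' a * g' b) * (g' x * g' y) ^ 2 := by
      ring
    rw [this]
    positivity
  by_cases hax' : 0 < g' a * g' x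
  · obtain ⟨z, hz, hgz⟩ := exists_zero_between_of_deriv_mul_deriv_pos hg hax ha hx hax'
    exact ⟨z, x, y, hz.1, hz.2, hxy, hyb, hgz, hx, hy⟩
  by_cases hxy' : 0 < g' x * g' y
  · obtain ⟨z, hz, hgz⟩ := exists_zero_between_of_deriv_mul_deriv_pos hg hxy hx hy hxy'
    exact ⟨x, z, y, hax, hz.1, hz.2, hyb, hx, hgz, hy⟩
  have hyb' : 0 < g' y * g' b :=
    pos_of_mul_pos_right hprod (mul_nonneg_of_nonpos_of_nonpos (not_lt.1 hax') (not_lt.1 hxy'))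
  obtain ⟨z, hz, hgz⟩ := exists_zero_between_of_deriv_mul_deriv_pos hg hyb hy hb hyb'
  exact ⟨x, y, z, hax, hxy, hz.1, hz.2, hx, hy, hgz⟩

lemma exists_unique_or_three_zeros_between (hg : ∀ s, HasDerivAt g (g' s) s)
    (hnd : ∀ s, g s = 0 → g' s ≠ 0) (hab : a < b) (ha : g a = 0) (hb : g b = 0)
    (hd : 0 < g' a * g' b) :
    (∃ z, a < z ∧ z < b ∧ g z = 0 ∧ (∀ x ∈ Ioo a z, g x ≠ 0) ∧ ∀ x ∈ Ioo z b, g x ≠ 0) ∨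
      ∃ z₁ z₂ z₃, a < z₁ ∧ z₁ < z₂ ∧ z₂ < z₃ ∧ z₃ < b ∧ g z₁ = 0 ∧ g z₂ = 0 ∧ g z₃ = 0 := by
  obtain ⟨z, ⟨haz, hzb⟩, hz⟩ := exists_zero_between_of_deriv_mul_deriv_pos hg hab ha hb hd
  by_cases hleft : ∃ x ∈ Ioo a z, g x = 0
  · obtain ⟨x, ⟨hax, hxz⟩, hx⟩ := hleft
    exact .inr (exists_three_zeros_of_two_zeros hg hnd hax hxz hzb ha hx hz hb hd)
  by_cases hright : ∃ x ∈ Ioo z b, g x = 0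
  · obtain ⟨x, ⟨hzx, hxb⟩, hx⟩ := hright
    exact .inr (exists_three_zeros_of_two_zeros hg hnd haz hzx hxb ha hz hx hb hd)
  push Not at hleft hright
  exact .inl ⟨z, haz, hzb, hz, hleft, hright⟩

end Zeros

/-! ### Periodic functions -/

section Periodic

variable {p : ℝ}

lemma periodic_deriv {F : Type*} [NormedAddCommGroup F] [NormedSpace ℝ F] {g : ℝ → F}
    (hg : Periodic g p) : Periodic (deriv g) p := fun s ↦ by
  rw [← deriv_comp_add_const]
  exact congrArg (deriv · s) (funext hg)

lemma ne_of_injOn_Ico_of_periodic {α : Type*} {g : ℝ → α} (hp : 0 < p) (hg : Periodic g p)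
    (hinj : InjOn g (Ico 0 p)) {u w : ℝ} (huw : u < w) (hwu : w < u + p) : g u ≠ g w := by
  intro heq
  have hmod (s : ℝ) : g (toIcoMod hp 0 s) = g s := by
    rw [← self_sub_toIcoDiv_zsmul, hg.sub_zsmul_eq]
  obtain ⟨n, hn⟩ := (toIcoMod_eq_toIcoMod hp).1 <|
    hinj (toIcoMod_mem_Ico' hp u) (toIcoMod_mem_Ico' hp w) (by rw [hmod, hmod, heq])
  rw [zsmul_eq_mul] at hn
  have hn0 : (0 : ℝ) < n := pos_of_mul_pos_left (by linarith : 0 < (n : ℝ) * p) hp.le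
  have hn1 : (n : ℝ) < 1 := (mul_lt_iff_lt_one_left hp).1 (by linarith)
  norm_cast at hn0 hn1
  omega

lemma exists_add_eq_of_periodic {g : ℝ → ℝ} (hcont : Continuous g) (hg : Periodic g p)
    (hp : p ≠ 0) (d : ℝ) : ∃ t, g (t + d) = g t := by
  obtain ⟨_, ⟨m, rfl⟩, hmax⟩ :=
    (hg.compact_of_continuous hp hcont).exists_isGreatest (range_nonempty g)
  have hle (s : ℝ) : g s ≤ g m := hmax (mem_range_self s)
  obtain ⟨t, ht⟩ := mem_range_of_exists_le_of_exists_ge (c := (0 : ℝ))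
    (f := fun t ↦ g (t + d) - g t) (by fun_prop)
    ⟨m, sub_nonpos.2 (hle _)⟩ ⟨m - d, by simpa using hle _⟩
  exact ⟨t, sub_eq_zero.1 ht⟩

lemma surjective_of_map_add_eq {θ : ℝ → ℝ} {Φ : ℝ} (hp : 0 < p) (hΦ : 0 < Φ) (hmono : Monotone θ)
    (hcont : Continuous θ) (hadd : ∀ s, θ (s + p) = θ s + Φ) : Surjective θ := by
  let lift : CircleDeg1Lift :=
    { toFun := fun s ↦ θ (p * s) / Φ
      monotone' := fun s t hst ↦ by
        dsimp only
        gcongr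
        exact hmono (by gcongr)
      map_add_one' := fun s ↦ by
        rw [mul_add, mul_one, hadd, add_div, div_self hΦ.ne'] }
  have hlift : Continuous lift := show Continuous fun s ↦ θ (p * s) / Φ by fun_prop
  intro y
  obtain ⟨s, hs⟩ := lift.continuous_iff_surjective.1 hlift (y / Φ)
  exact ⟨p * s, (div_left_inj' hΦ.ne').1 hs⟩

lemma exists_lt_map_eq_add_and_eq {g θ : ℝ → ℝ} {Φ d : ℝ} (hp : 0 < p) (hg : Continuous g)
    (hper : Periodic g p) (hθ : Continuous θ) (hmono : StrictMono θ)
    (hadd : ∀ s, θ (s + p) = θ s + Φ) (hd : 0 < d) (hdΦ : d < Φ) :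
    ∃ u w, u < w ∧ w < u + p ∧ θ w = θ u + d ∧ g w = g u := by
  have hΦ : 0 < Φ := hd.trans hdΦ
  let e : ℝ ≃o ℝ := hmono.orderIsoOfSurjective θ
    (surjective_of_map_add_eq hp hΦ hmono.monotone hθ hadd)
  have he (t : ℝ) : θ (e.symm t) = t := e.apply_symm_apply t
  have hperiodic : Periodic (fun t ↦ g (e.symm t)) Φ := fun t ↦ by
    have : e.symm (t + Φ) = e.symm t + p := hmono.injective (by rw [hadd, he, he])
    simp only [this, hper (e.symm t)]
  obtain ⟨t, ht⟩ := exists_add_eq_of_periodic (hg.comp e.symm.continuous) hperiodic hΦ.ne' d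
  refine ⟨e.symm t, e.symm (t + d), e.symm.lt_iff_lt.2 (by linarith), ?_, by rw [he, he], ht⟩
  rw [← hmono.lt_iff_lt, hadd, he, he]
  linarith

end Periodic

/-! ### Central force motion -/

/-- Polar description of a planar motion under an attractive central force: `r` is the distance to
the centre, `v` the radial velocity, `φ` the polar angle, `c` the angular momentum, and `f x` the
magnitude of the force at distance `x`. -/
structure IsCentralOrbit (f : ℝ → ℝ) (c : ℝ) (r v φ : ℝ → ℝ) : Prop where
  angularMomentum_pos : 0 < c
  radius_pos : ∀ s, 0 < r s
  hasDerivAt_radius : ∀ s, HasDerivAt r (v s) s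
  hasDerivAt_radialVelocity : ∀ s, HasDerivAt v (c ^ 2 / r s ^ 3 - f (r s)) s
  hasDerivAt_angle : ∀ s, HasDerivAt φ (c / r s ^ 2) s

/-- Cartesian components of the velocity of the motion with polar coordinates `(r, φ)`, radial
velocity `v` and angular momentum `c`. -/
def orbitVelocity (c : ℝ) (r v φ : ℝ → ℝ) (s : ℝ) : ℝ × ℝ :=
  (v s * cos (φ s) - c / r s * sin (φ s), v s * sin (φ s) + c / r s * cos (φ s))

/-- Direction of `orbitVelocity`, measured from the second coordinate axis, as a continuous
function of time. -/
def orbitVelocityAngle (c : ℝ) (r v φ : ℝ → ℝ) (s : ℝ) : ℝ :=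
  φ s - arctan (r s * v s / c)

namespace IsCentralOrbit

variable {f f' F r v φ : ℝ → ℝ} {c p a b : ℝ}

lemma strictMono_angle (h : IsCentralOrbit f c r v φ) : StrictMono φ :=
  strictMono_of_hasDerivAt_pos h.hasDerivAt_angle fun s ↦
    div_pos h.angularMomentum_pos (pow_pos (h.radius_pos s) 2)

lemma continuous_angle (h : IsCentralOrbit f c r v φ) : Continuous φ :=
  continuous_iff_continuousAt.2 fun s ↦ (h.hasDerivAt_angle s).continuousAt

lemma continuous_radius (h : IsCentralOrbit f c r v φ) : Continuous r :=
  continuous_iff_continuousAt.2 fun s ↦ (h.hasDerivAt_radius s).continuousAt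

lemma continuous_radialVelocity (h : IsCentralOrbit f c r v φ) : Continuous v :=
  continuous_iff_continuousAt.2 fun s ↦ (h.hasDerivAt_radialVelocity s).continuousAt

lemma periodic_radialVelocity (h : IsCentralOrbit f c r v φ) (hper : Periodic r p) :
    Periodic v p := by
  have hv : deriv r = v := funext fun s ↦ (h.hasDerivAt_radius s).deriv
  exact hv ▸ periodic_deriv hper

lemma angle_add_period (h : IsCentralOrbit f c r v φ) (hper : Periodic r p) (s : ℝ) :
    φ (s + p) = φ s + (φ p - φ 0) := by
  have hconst (s : ℝ) : HasDerivAt (fun s ↦ φ (s + p) - φ s) 0 s := by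
    refine (((h.hasDerivAt_angle (s + p)).comp_add_const s p).sub
      (h.hasDerivAt_angle s)).congr_deriv ?_
    rw [hper s, sub_self]
  have := is_const_of_deriv_eq_zero (fun s ↦ (hconst s).differentiableAt)
    (fun s ↦ (hconst s).deriv) s 0
  simp only [zero_add] at this
  linarith

lemma energy_eq (h : IsCentralOrbit f c r v φ) (hF : ∀ x > 0, HasDerivAt F (f x) x) (s t : ℝ) :
    v s ^ 2 + (c ^ 2 / r s ^ 2 + 2 * F (r s)) = v t ^ 2 + (c ^ 2 / r t ^ 2 + 2 * F (r t)) := by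
  have hconst (s : ℝ) :
      HasDerivAt (fun s ↦ v s ^ 2 + (c ^ 2 / r s ^ 2 + 2 * F (r s))) 0 s := by
    have hr := (h.radius_pos s).ne'
    have hFr := (hF (r s) (h.radius_pos s)).comp s (h.hasDerivAt_radius s)
    refine (((h.hasDerivAt_radialVelocity s).pow 2).add (((hasDerivAt_const s (c ^ 2)).div
      ((h.hasDerivAt_radius s).pow 2) (pow_ne_zero 2 hr)).add
        (hFr.const_mul 2))).congr_deriv ?_
    simp only [Pi.pow_apply]
    field_simp
    ring
  exact is_const_of_deriv_eq_zero (fun s ↦ (hconst s).differentiableAt)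
    (fun s ↦ (hconst s).deriv) s t

/-! ### The apsidal angle -/

/-- For `f x = k / x ^ 2` the differentiated function is, up to sign, a component of the conserved
Laplace–Runge–Lenz vector. -/
lemma hasDerivAt_keplerComparison (h : IsCentralOrbit f c r v φ)
    (hf : ∀ x > 0, HasDerivAt f (f' x) x) (α s : ℝ) :
    HasDerivAt
      (fun s ↦ c * v s * cos (φ s - α) + (r s ^ 2 * f (r s) - c ^ 2 / r s) * sin (φ s - α))
      (r s * (2 * f (r s) + r s * f' (r s)) * sin (φ s - α) * v s) s := by
  have hr := (h.radius_pos s).ne'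
  have hφ := (h.hasDerivAt_angle s).sub_const α
  have hfr := (hf (r s) (h.radius_pos s)).comp s (h.hasDerivAt_radius s)
  refine ((((h.hasDerivAt_radialVelocity s).const_mul c).mul hφ.cos).add
    (((((h.hasDerivAt_radius s).pow 2).mul hfr).sub ((hasDerivAt_const s (c ^ 2)).div
      (h.hasDerivAt_radius s) hr)).mul hφ.sin)).congr_deriv ?_
  simp only [Pi.sub_apply, Pi.div_apply, Pi.pow_apply, Pi.mul_apply, comp_apply]
  field_simp
  ring

/-- For `f x = k * x` the differentiated function is twice an off-diagonal entry of the conserved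
Fradkin tensor `ẋᵢ ẋⱼ + k xᵢ xⱼ`. -/
lemma hasDerivAt_hookeComparison (h : IsCentralOrbit f c r v φ)
    (hf : ∀ x > 0, HasDerivAt f (f' x) x) (α s : ℝ) :
    HasDerivAt
      (fun s ↦ 2 * c * v s / r s * cos (2 * (φ s - α))
        - (c ^ 2 / r s ^ 2 - r s * f (r s) - v s ^ 2) * sin (2 * (φ s - α)))
      (-((f (r s) - r s * f' (r s)) * sin (2 * (φ s - α)) * v s)) s := by
  have hr := (h.radius_pos s).ne'
  have hφ := ((h.hasDerivAt_angle s).sub_const α).const_mul 2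
  have hfr := (hf (r s) (h.radius_pos s)).comp s (h.hasDerivAt_radius s)
  refine (((((h.hasDerivAt_radialVelocity s).const_mul (2 * c)).div (h.hasDerivAt_radius s) hr).mul
    hφ.cos).sub ((((((hasDerivAt_const s (c ^ 2)).div ((h.hasDerivAt_radius s).pow 2)
      (pow_ne_zero 2 hr)).sub ((h.hasDerivAt_radius s).mul hfr)).sub
        ((h.hasDerivAt_radialVelocity s).pow 2))).mul hφ.sin)).congr_deriv ?_
  simp only [Pi.sub_apply, Pi.div_apply, Pi.pow_apply, Pi.mul_apply, comp_apply]
  field_simp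
  ring

lemma apsidalAngle_lt_pi (h : IsCentralOrbit f c r v φ) (hf : ∀ x > 0, HasDerivAt f (f' x) x)
    (hKepler : ∀ x > 0, 0 < 2 * f x + x * f' x) (hab : a < b) (ha : v a = 0) (hb : v b = 0)
    (hne : ∀ s ∈ Ioo a b, v s ≠ 0) : φ b - φ a < π := by
  by_contra! hge
  obtain ⟨ε, -, hε⟩ := exists_ne_zero_forall_mul_pos isPreconnected_Ioo
    h.continuous_radialVelocity.continuousOn hne
  obtain ⟨b', ⟨-, hb'b⟩, hφb'⟩ := intermediate_value_Icc hab.le h.continuous_angle.continuousOn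
    (⟨by linarith [pi_pos], by linarith⟩ : φ a + π ∈ Icc (φ a) (φ b))
  have hab' : a < b' := h.strictMono_angle.lt_iff_lt.1 (by linarith [pi_pos])
  have hderiv (s : ℝ) := (h.hasDerivAt_keplerComparison hf (φ a) s).const_mul ε
  have hmono := strictMonoOn_of_hasDerivWithinAt_pos (convex_Icc a b')
    (fun s _ ↦ (hderiv s).continuousAt.continuousWithinAt)
    (fun s _ ↦ (hderiv s).hasDerivWithinAt) fun s hs ↦ by
      rw [interior_Icc] at hs
      have hsin : 0 < sin (φ s - φ a) := sin_pos_of_pos_of_lt_pi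
        (by linarith [h.strictMono_angle hs.1]) (by linarith [h.strictMono_angle hs.2])
      have hr := h.radius_pos s
      have hK := hKepler _ hr
      have hv := hε s ⟨hs.1, hs.2.trans_le hb'b⟩
      have := mul_pos (mul_pos (mul_pos hr hK) hsin) hv
      linarith
  have hlt := hmono ⟨le_rfl, hab'.le⟩ ⟨hab'.le, le_rfl⟩ hab'
  have hπ : φ b' - φ a = π := by linarith
  simp only [ha, sub_self, hπ, sin_zero, cos_pi, sin_pi] at hlt
  have hvb' : 0 ≤ ε * v b' := by
    rcases hb'b.eq_or_lt with rfl | hlt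
    · rw [hb, mul_zero]
    · exact (hε b' ⟨hab', hlt⟩).le
  linarith [mul_nonneg hvb' h.angularMomentum_pos.le]

lemma pi_div_two_lt_apsidalAngle (h : IsCentralOrbit f c r v φ)
    (hf : ∀ x > 0, HasDerivAt f (f' x) x) (hHooke : ∀ x > 0, x * f' x < f x) (hab : a < b)
    (ha : v a = 0) (hb : v b = 0) (hne : ∀ s ∈ Ioo a b, v s ≠ 0) : π / 2 < φ b - φ a := by
  by_contra! hle
  obtain ⟨ε, -, hε⟩ := exists_ne_zero_forall_mul_pos isPreconnected_Ioo
    h.continuous_radialVelocity.continuousOn hne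
  have hderiv (s : ℝ) := (h.hasDerivAt_hookeComparison hf (φ a) s).const_mul ε
  have hanti := strictAntiOn_of_hasDerivWithinAt_neg (convex_Icc a b)
    (fun s _ ↦ (hderiv s).continuousAt.continuousWithinAt)
    (fun s _ ↦ (hderiv s).hasDerivWithinAt) fun s hs ↦ by
      rw [interior_Icc] at hs
      have hsin : 0 < sin (2 * (φ s - φ a)) := sin_pos_of_pos_of_lt_pi
        (by linarith [h.strictMono_angle hs.1]) (by linarith [h.strictMono_angle hs.2])
      have := mul_pos (mul_pos (sub_pos.2 (hHooke _ (h.radius_pos s))) hsin) (hε s hs)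
      linarith
  have hlt := hanti ⟨le_rfl, hab.le⟩ ⟨hab.le, le_rfl⟩ hab
  have hsin : 0 ≤ sin (2 * (φ b - φ a)) :=
    sin_nonneg_of_nonneg_of_le_pi (by linarith [h.strictMono_angle hab]) (by linarith)
  have haccel : ε * (c ^ 2 / r b ^ 3 - f (r b)) ≤ 0 := deriv_nonpos_of_pos_left
    ((h.hasDerivAt_radialVelocity b).const_mul ε) hab (by rw [hb, mul_zero]) hε
  have hrb := h.radius_pos b
  have hvalue : c ^ 2 / r b ^ 2 - r b * f (r b) = r b * (c ^ 2 / r b ^ 3 - f (r b)) := by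
    field_simp
  simp only [ha, hb, sub_self, mul_zero, zero_div, zero_mul, sin_zero, ne_eq, OfNat.ofNat_ne_zero,
    not_false_eq_true, zero_pow, sub_zero, zero_sub, hvalue] at hlt
  linarith [mul_nonpos_of_nonneg_of_nonpos (mul_nonneg hrb.le hsin) haccel]

lemma pi_div_two_lt_angle_sub (h : IsCentralOrbit f c r v φ)
    (hf : ∀ x > 0, HasDerivAt f (f' x) x) (hHooke : ∀ x > 0, x * f' x < f x) (hab : a < b)
    (ha : v a = 0) (hb : v b = 0) (hnd : c ^ 2 / r a ^ 3 - f (r a) ≠ 0) : π / 2 < φ b - φ a := by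
  obtain ⟨z, ⟨haz, hzb⟩, hz, hne⟩ := exists_next_zero h.hasDerivAt_radialVelocity hnd hab hb
  linarith [h.pi_div_two_lt_apsidalAngle hf hHooke haz ha hz hne, h.strictMono_angle.monotone hzb]

/-! ### Closed orbits -/

/-- Otherwise a period would consist of either two apsidal intervals, of total angle less than
`2 * π`, or at least four, of total angle more than `2 * π`. -/
lemma exists_equilibrium (h : IsCentralOrbit f c r v φ) (hf : ∀ x > 0, HasDerivAt f (f' x) x)
    (hKepler : ∀ x > 0, 0 < 2 * f x + x * f' x) (hHooke : ∀ x > 0, x * f' x < f x) (hp : 0 < p)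
    (hper : Periodic r p) (hturn : ∀ s, φ (s + p) = φ s + 2 * π) :
    ∃ s, v s = 0 ∧ c ^ 2 = r s ^ 3 * f (r s) := by
  by_contra! hne
  have hnd (s : ℝ) (hs : v s = 0) : c ^ 2 / r s ^ 3 - f (r s) ≠ 0 := fun hzero ↦ by
    have := h.radius_pos s
    field_simp at hzero
    exact hne s hs (by linarith)
  obtain ⟨a, -, ha⟩ := exists_hasDerivAt_eq_zero hp h.continuous_radius.continuousOn
    (by rw [← hper 0, zero_add]) fun s _ ↦ h.hasDerivAt_radius s
  have hap : v (a + p) = 0 := by rw [h.periodic_radialVelocity hper, ha]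
  have hpos : 0 < (c ^ 2 / r a ^ 3 - f (r a)) * (c ^ 2 / r (a + p) ^ 3 - f (r (a + p))) := by
    rw [hper a]
    exact mul_self_pos.2 (hnd a ha)
  have hgap {x y : ℝ} (hxy : x < y) (hx : v x = 0) (hy : v y = 0) : π / 2 < φ y - φ x :=
    h.pi_div_two_lt_angle_sub hf hHooke hxy hx hy (hnd x hx)
  rcases exists_unique_or_three_zeros_between h.hasDerivAt_radialVelocity hnd (by linarith) ha hap
    hpos with ⟨z, haz, hzb, hz, hleft, hright⟩ | ⟨x, y, z, hax, hxy, hyz, hzb, hx, hy, hz⟩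
  · linarith [h.apsidalAngle_lt_pi hf hKepler haz ha hz hleft,
      h.apsidalAngle_lt_pi hf hKepler hzb hz hap hright, hturn a]
  · linarith [hgap hax ha hx, hgap hxy hx hy, hgap hyz hy hz, hgap hzb hz hap, hturn a]

lemma isMinOn_effectivePotential {x₀ : ℝ} (hF : ∀ x > 0, HasDerivAt F (f x) x)
    (hmono : MonotoneOn (fun x ↦ x ^ 3 * f x) (Ioi 0)) (hx₀ : 0 < x₀) (hc : c ^ 2 = x₀ ^ 3 * f x₀) :
    IsMinOn (fun x ↦ c ^ 2 / x ^ 2 + 2 * F x) (Ioi 0) x₀ := by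
  have hderiv (x : ℝ) (hx : 0 < x) : HasDerivAt (fun x ↦ c ^ 2 / x ^ 2 + 2 * F x)
      (2 * (x ^ 3 * f x - x₀ ^ 3 * f x₀) / x ^ 3) x := by
    refine (((hasDerivAt_const x (c ^ 2)).div ((hasDerivAt_id x).pow 2)
      (pow_ne_zero 2 hx.ne')).add ((hF x hx).const_mul 2)).congr_deriv ?_
    simp only [Pi.pow_apply, id, ← hc]
    field_simp
    ring
  refine isMinOn_Ioi_of_deriv (hderiv _ hx₀).continuousAt
    (fun x hx ↦ (hderiv x hx.1).differentiableAt.differentiableWithinAt)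
    (fun x hx ↦ (hderiv x (hx₀.trans hx)).differentiableAt.differentiableWithinAt)
    (fun x hx ↦ ?_) (fun x hx ↦ ?_)
  · rw [(hderiv x hx.1).deriv]
    exact div_nonpos_of_nonpos_of_nonneg (by linarith [hmono hx.1 hx₀ hx.2.le])
      (pow_pos hx.1 3).le
  · have hx0 : 0 < x := hx₀.trans hx
    rw [(hderiv x hx0).deriv]
    exact div_nonneg (by linarith [hmono hx₀ hx0 (le_of_lt hx)]) (pow_pos hx0 3).le

lemma radialVelocity_eq_zero_of_equilibrium (h : IsCentralOrbit f c r v φ)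
    (hF : ∀ x > 0, HasDerivAt F (f x) x) (hmono : MonotoneOn (fun x ↦ x ^ 3 * f x) (Ioi 0))
    (ha : v a = 0) (hea : c ^ 2 = r a ^ 3 * f (r a)) (s : ℝ) : v s = 0 := by
  have hmin : c ^ 2 / r a ^ 2 + 2 * F (r a) ≤ c ^ 2 / r s ^ 2 + 2 * F (r s) :=
    isMinOn_effectivePotential hF hmono (h.radius_pos a) hea (h.radius_pos s)
  have henergy := h.energy_eq hF s a
  rw [ha] at henergy
  exact pow_eq_zero_iff two_ne_zero |>.1 (le_antisymm (by linarith) (sq_nonneg _))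

lemma radius_eq_of_radialVelocity_eq_zero (h : IsCentralOrbit f c r v φ) (hv : ∀ s, v s = 0)
    (s t : ℝ) : r s = r t :=
  is_const_of_deriv_eq_zero (fun s ↦ (h.hasDerivAt_radius s).differentiableAt)
    (fun s ↦ by rw [(h.hasDerivAt_radius s).deriv, hv]) s t

/-! ### The hodograph -/

lemma hasDerivAt_velocityAngle (h : IsCentralOrbit f c r v φ) (s : ℝ) :
    HasDerivAt (orbitVelocityAngle c r v φ)
      (c * r s * f (r s) / (c ^ 2 + r s ^ 2 * v s ^ 2)) s := by
  have hc := h.angularMomentum_pos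
  have hr := h.radius_pos s
  refine ((h.hasDerivAt_angle s).sub ((((h.hasDerivAt_radius s).mul
    (h.hasDerivAt_radialVelocity s)).div_const c).arctan)).congr_deriv ?_
  simp only [Pi.mul_apply]
  have : c ^ 2 + r s ^ 2 * v s ^ 2 ≠ 0 := by positivity
  field_simp
  ring

lemma velocity_eq (h : IsCentralOrbit f c r v φ) (s : ℝ) :
    orbitVelocity c r v φ s = (c / r s * √(1 + (r s * v s / c) ^ 2)) •
      (-sin (orbitVelocityAngle c r v φ s), cos (orbitVelocityAngle c r v φ s)) := by
  have hc := h.angularMomentum_pos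
  have hr := h.radius_pos s
  simp only [orbitVelocity, orbitVelocityAngle, sin_sub, cos_sub, sin_arctan, cos_arctan,
    Prod.smul_mk, smul_eq_mul, Prod.mk.injEq]
  constructor
  · field_simp
    ring
  · field_simp
    ring

lemma exists_velocity_eq (h : IsCentralOrbit f c r v φ) (hF : ∀ x > 0, HasDerivAt F (f x) x)
    (hf : ∀ x > 0, 0 < f x) (hp : 0 < p) (hper : Periodic r p) (hturn : 2 * π < φ p - φ 0) :
    ∃ u w, u < w ∧ w < u + p ∧ orbitVelocity c r v φ u = orbitVelocity c r v φ w := by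
  have hmono : StrictMono (orbitVelocityAngle c r v φ) :=
    strictMono_of_hasDerivAt_pos h.hasDerivAt_velocityAngle fun s ↦ by
      have hc := h.angularMomentum_pos
      have hr := h.radius_pos s
      have := hf _ hr
      positivity
  have hcont : Continuous (orbitVelocityAngle c r v φ) :=
    continuous_iff_continuousAt.2 fun s ↦ (h.hasDerivAt_velocityAngle s).continuousAt
  have hadd (s : ℝ) : orbitVelocityAngle c r v φ (s + p) =
      orbitVelocityAngle c r v φ s + (φ p - φ 0) := by
    simp only [orbitVelocityAngle, hper s, h.periodic_radialVelocity hper s,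
      h.angle_add_period hper s]
    ring
  obtain ⟨u, w, huw, hwu, hangle, hradius⟩ := exists_lt_map_eq_add_and_eq hp h.continuous_radius
    hper hcont hmono hadd two_pi_pos hturn
  refine ⟨u, w, huw, hwu, ?_⟩
  have hv : v w ^ 2 = v u ^ 2 := by
    have := h.energy_eq hF w u
    rw [hradius] at this
    linarith
  simp only [h.velocity_eq, hangle, sin_add_two_pi, cos_add_two_pi, hradius, div_pow, mul_pow, hv]

end IsCentralOrbit

section RotatingFrame

variable {E : Type*} [NormedAddCommGroup E] [NormedSpace ℝ E]

lemma rotatingFrame_eq {T N : ℝ → E} {φ κ : ℝ → ℝ} (hφ : ∀ s, HasDerivAt φ (κ s) s)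
    (hT : ∀ s, HasDerivAt T (κ s • N s) s) (hN : ∀ s, HasDerivAt N (-(κ s • T s)) s)
    (hφ0 : φ 0 = 0) (s : ℝ) :
    T s = cos (φ s) • T 0 + sin (φ s) • N 0 ∧ N s = cos (φ s) • N 0 - sin (φ s) • T 0 := by
  have hderivT (s : ℝ) : HasDerivAt (fun s ↦ cos (φ s) • T s - sin (φ s) • N s) 0 s :=
    (((hφ s).cos.smul (hT s)).sub ((hφ s).sin.smul (hN s))).congr_deriv (by module)
  have hderivN (s : ℝ) : HasDerivAt (fun s ↦ sin (φ s) • T s + cos (φ s) • N s) 0 s :=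
    (((hφ s).sin.smul (hT s)).add ((hφ s).cos.smul (hN s))).congr_deriv (by module)
  have hT0 : T 0 = cos (φ s) • T s - sin (φ s) • N s := by
    simpa [hφ0] using is_const_of_deriv_eq_zero (fun s ↦ (hderivT s).differentiableAt)
      (fun s ↦ (hderivT s).deriv) 0 s
  have hN0 : N 0 = sin (φ s) • T s + cos (φ s) • N s := by
    simpa [hφ0] using is_const_of_deriv_eq_zero (fun s ↦ (hderivN s).differentiableAt)
      (fun s ↦ (hderivN s).deriv) 0 s
  constructor
  · rw [hT0, hN0]
    linear_combination (norm := module) (-(sin_sq_add_cos_sq (φ s))) • T s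
  · rw [hT0, hN0]
    linear_combination (norm := module) (-(sin_sq_add_cos_sq (φ s))) • N s

end RotatingFrame

/-! ### Stationary curves -/

/-- A unit-speed curve `ξ` with positive tension `σ` satisfying the stationary equation
`∂ₛ(σ ∂ₛξ) + ξ = 0`. -/
structure IsStationaryCurve {E : Type*} [NormedAddCommGroup E] [InnerProductSpace ℝ E]
    (ξ : ℝ → E) (σ : ℝ → ℝ) : Prop where
  differentiable_deriv : Differentiable ℝ (deriv ξ)
  differentiable_tension : Differentiable ℝ σ
  tension_pos : ∀ s, 0 < σ s
  norm_deriv : ∀ s, ‖deriv ξ s‖ = 1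
  deriv_add_eq_zero : ∀ s, deriv (fun r ↦ σ r • deriv ξ r) s + ξ s = 0

/-- The constant value of `σ² k`, where `k` is the curvature of `ξ`; it is the angular momentum of
the motion `σ ∂ₛξ`. -/
def curveAngularMomentum {E : Type*} [NormedAddCommGroup E] [NormedSpace ℝ E]
    (ξ : ℝ → E) (σ : ℝ → ℝ) : ℝ :=
  σ 0 ^ 2 * ‖deriv (deriv ξ) 0‖

/-- The polar angle of the motion `σ ∂ₛξ`, which is also the turning angle of `ξ`. -/
def curveTurningAngle {E : Type*} [NormedAddCommGroup E] [NormedSpace ℝ E]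
    (ξ : ℝ → E) (σ : ℝ → ℝ) (s : ℝ) : ℝ :=
  ∫ t in (0 : ℝ)..s, curveAngularMomentum ξ σ / σ t ^ 2

/-- The unit normal of `ξ`, written through `σ² k = const` so that no division by the curvature
occurs. -/
def curveNormal {E : Type*} [NormedAddCommGroup E] [NormedSpace ℝ E]
    (ξ : ℝ → E) (σ : ℝ → ℝ) (s : ℝ) : E :=
  (σ s ^ 2 / curveAngularMomentum ξ σ) • deriv (deriv ξ) s

namespace IsStationaryCurve

variable {E : Type*} [NormedAddCommGroup E] [InnerProductSpace ℝ E] {ξ : ℝ → E} {σ : ℝ → ℝ}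
  {p : ℝ}

open scoped RealInnerProductSpace

lemma hasDerivAt_curve (h : IsStationaryCurve ξ σ) (s : ℝ) : HasDerivAt ξ (deriv ξ s) s :=
  (differentiableAt_of_deriv_ne_zero
    (norm_ne_zero_iff.1 (by rw [h.norm_deriv]; exact one_ne_zero))).hasDerivAt

lemma hasDerivAt_tangent (h : IsStationaryCurve ξ σ) (s : ℝ) :
    HasDerivAt (deriv ξ) (deriv (deriv ξ) s) s :=
  (h.differentiable_deriv s).hasDerivAt

lemma hasDerivAt_tension (h : IsStationaryCurve ξ σ) (s : ℝ) : HasDerivAt σ (deriv σ s) s :=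
  (h.differentiable_tension s).hasDerivAt

lemma inner_deriv_self (h : IsStationaryCurve ξ σ) (s : ℝ) : ⟪deriv ξ s, deriv ξ s⟫ = 1 := by
  rw [real_inner_self_eq_norm_sq, h.norm_deriv, one_pow]

lemma inner_deriv_deriv_deriv (h : IsStationaryCurve ξ σ) (s : ℝ) :
    ⟪deriv ξ s, deriv (deriv ξ) s⟫ = 0 := by
  have hconst : HasDerivAt (fun s ↦ ‖deriv ξ s‖ ^ 2) 0 s := by
    simp only [h.norm_deriv]
    exact hasDerivAt_const _ _
  linarith [(h.hasDerivAt_tangent s).norm_sq.unique hconst]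

lemma curve_eq (h : IsStationaryCurve ξ σ) (s : ℝ) :
    ξ s = -(deriv σ s • deriv ξ s + σ s • deriv (deriv ξ) s) := by
  have hderiv : deriv (fun r ↦ σ r • deriv ξ r) s =
      σ s • deriv (deriv ξ) s + deriv σ s • deriv ξ s :=
    ((h.hasDerivAt_tension s).smul (h.hasDerivAt_tangent s)).deriv
  rw [add_comm (deriv σ s • deriv ξ s), ← hderiv]
  exact eq_neg_of_add_eq_zero_right (h.deriv_add_eq_zero s)

lemma deriv_tension_eq (h : IsStationaryCurve ξ σ) (s : ℝ) : deriv σ s = -⟪deriv ξ s, ξ s⟫ := by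
  rw [h.curve_eq s, inner_neg_right, inner_add_right, inner_smul_right, inner_smul_right,
    h.inner_deriv_self, h.inner_deriv_deriv_deriv]
  ring

lemma inner_deriv_deriv_curve (h : IsStationaryCurve ξ σ) (s : ℝ) :
    ⟪deriv (deriv ξ) s, ξ s⟫ = -(σ s * ‖deriv (deriv ξ) s‖ ^ 2) := by
  rw [h.curve_eq s, inner_neg_right, inner_add_right, inner_smul_right, inner_smul_right,
    real_inner_comm, h.inner_deriv_deriv_deriv, real_inner_self_eq_norm_sq]
  ring

lemma hasDerivAt_deriv_tension (h : IsStationaryCurve ξ σ) (s : ℝ) :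
    HasDerivAt (deriv σ) (σ s * ‖deriv (deriv ξ) s‖ ^ 2 - 1) s := by
  rw [funext h.deriv_tension_eq]
  refine ((h.hasDerivAt_tangent s).inner ℝ (h.hasDerivAt_curve s)).neg.congr_deriv ?_
  rw [h.inner_deriv_self, h.inner_deriv_deriv_curve]
  ring

lemma norm_curve_sq (h : IsStationaryCurve ξ σ) (s : ℝ) :
    ‖ξ s‖ ^ 2 = deriv σ s ^ 2 + σ s ^ 2 * ‖deriv (deriv ξ) s‖ ^ 2 := by
  rw [h.curve_eq s, norm_neg, norm_add_sq_real, norm_smul, norm_smul, inner_smul_left,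
    inner_smul_right, h.inner_deriv_deriv_deriv, h.norm_deriv, mul_pow, mul_pow]
  simp only [norm_eq_abs, sq_abs]
  ring

lemma hasDerivAt_tension_sq_smul_deriv_deriv (h : IsStationaryCurve ξ σ) (s : ℝ) :
    HasDerivAt (fun s ↦ σ s ^ 2 • deriv (deriv ξ) s)
      (-((σ s ^ 2 * ‖deriv (deriv ξ) s‖ ^ 2) • deriv ξ s)) s := by
  have hfun : (fun s ↦ σ s ^ 2 • deriv (deriv ξ) s) =
      fun s ↦ -(σ s • (ξ s + deriv σ s • deriv ξ s)) := funext fun s ↦ by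
    rw [h.curve_eq s]
    module
  rw [hfun]
  refine ((h.hasDerivAt_tension s).smul ((h.hasDerivAt_curve s).add
    ((h.hasDerivAt_deriv_tension s).smul (h.hasDerivAt_tangent s)))).neg.congr_deriv ?_
  simp only [Pi.add_apply, Pi.smul_apply']
  rw [h.curve_eq s]
  module

lemma tension_sq_mul_curvature (h : IsStationaryCurve ξ σ) (s : ℝ) :
    σ s ^ 2 * ‖deriv (deriv ξ) s‖ = curveAngularMomentum ξ σ := by
  have hconst (s : ℝ) : HasDerivAt (fun s ↦ ‖σ s ^ 2 • deriv (deriv ξ) s‖ ^ 2) 0 s := by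
    refine (h.hasDerivAt_tension_sq_smul_deriv_deriv s).norm_sq.congr_deriv ?_
    rw [inner_neg_right, inner_smul_left, inner_smul_right, real_inner_comm,
      h.inner_deriv_deriv_deriv]
    simp only [mul_zero, neg_zero]
  have heq := is_const_of_deriv_eq_zero (fun s ↦ (hconst s).differentiableAt)
    (fun s ↦ (hconst s).deriv) s 0
  have hnorm (s : ℝ) : ‖σ s ^ 2 • deriv (deriv ξ) s‖ = σ s ^ 2 * ‖deriv (deriv ξ) s‖ := by
    rw [norm_smul, norm_of_nonneg (sq_nonneg _)]
  simp only [hnorm] at heq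
  exact (pow_left_inj₀ (mul_nonneg (sq_nonneg _) (norm_nonneg _))
    (mul_nonneg (sq_nonneg _) (norm_nonneg _)) two_ne_zero).1 heq

lemma curvature_eq (h : IsStationaryCurve ξ σ) (s : ℝ) :
    ‖deriv (deriv ξ) s‖ = curveAngularMomentum ξ σ / σ s ^ 2 :=
  eq_div_of_mul_eq (pow_pos (h.tension_pos s) 2).ne'
    (by rw [mul_comm, h.tension_sq_mul_curvature])

lemma periodic_deriv_tension (h : IsStationaryCurve ξ σ) (hper : Periodic ξ p) :
    Periodic (deriv σ) p := fun s ↦ by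
  rw [h.deriv_tension_eq, h.deriv_tension_eq, hper s, periodic_deriv hper s]

lemma angularMomentum_pos (h : IsStationaryCurve ξ σ) (hp : 0 < p) (hper : Periodic ξ p) :
    0 < curveAngularMomentum ξ σ := by
  obtain ⟨a, -, ha⟩ := exists_hasDerivAt_eq_zero hp
    (fun s _ ↦ (h.hasDerivAt_deriv_tension s).continuousAt.continuousWithinAt)
    (by rw [← h.periodic_deriv_tension hper 0, zero_add])
    fun s _ ↦ h.hasDerivAt_deriv_tension s
  have hcurv : 0 < ‖deriv (deriv ξ) a‖ := by
    refine (norm_nonneg _).lt_of_ne fun hzero ↦ ?_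
    norm_num [← hzero] at ha
  rw [← h.tension_sq_mul_curvature a]
  exact mul_pos (pow_pos (h.tension_pos a) 2) hcurv

lemma periodic_tension (h : IsStationaryCurve ξ σ) (hp : 0 < p) (hper : Periodic ξ p) :
    Periodic σ p := fun s ↦ by
  have hc := h.angularMomentum_pos hp hper
  have heq : σ (s + p) ^ 2 * ‖deriv (deriv ξ) s‖ = σ s ^ 2 * ‖deriv (deriv ξ) s‖ := by
    rw [← periodic_deriv (periodic_deriv hper) s, h.tension_sq_mul_curvature,
      periodic_deriv (periodic_deriv hper) s, h.tension_sq_mul_curvature]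
  have hcurv : ‖deriv (deriv ξ) s‖ ≠ 0 := fun hzero ↦ by
    rw [← h.tension_sq_mul_curvature s, hzero, mul_zero] at hc
    exact hc.false
  exact (pow_left_inj₀ (h.tension_pos _).le (h.tension_pos s).le two_ne_zero).1
    (mul_right_cancel₀ hcurv heq)

lemma hasDerivAt_turningAngle (h : IsStationaryCurve ξ σ) (s : ℝ) :
    HasDerivAt (curveTurningAngle ξ σ) (curveAngularMomentum ξ σ / σ s ^ 2) s := by
  have hcont : Continuous fun t ↦ curveAngularMomentum ξ σ / σ t ^ 2 :=
    continuous_const.div (h.differentiable_tension.continuous.pow 2)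
      fun t ↦ (pow_pos (h.tension_pos t) 2).ne'
  exact hcont.integral_hasStrictDerivAt 0 s |>.hasDerivAt

lemma isCentralOrbit (h : IsStationaryCurve ξ σ) (hp : 0 < p) (hper : Periodic ξ p) :
    IsCentralOrbit (fun _ ↦ 1) (curveAngularMomentum ξ σ) σ (deriv σ) (curveTurningAngle ξ σ) where
  angularMomentum_pos := h.angularMomentum_pos hp hper
  radius_pos := h.tension_pos
  hasDerivAt_radius := h.hasDerivAt_tension
  hasDerivAt_radialVelocity s := by
    have := h.tension_pos s
    convert h.hasDerivAt_deriv_tension s using 2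
    rw [h.curvature_eq]
    field_simp
  hasDerivAt_angle := h.hasDerivAt_turningAngle

lemma frame_eq (h : IsStationaryCurve ξ σ) (hp : 0 < p) (hper : Periodic ξ p) (s : ℝ) :
    deriv ξ s = cos (curveTurningAngle ξ σ s) • deriv ξ 0 +
        sin (curveTurningAngle ξ σ s) • curveNormal ξ σ 0 ∧
      curveNormal ξ σ s = cos (curveTurningAngle ξ σ s) • curveNormal ξ σ 0 -
        sin (curveTurningAngle ξ σ s) • deriv ξ 0 := by
  have hc := h.angularMomentum_pos hp hper
  refine rotatingFrame_eq h.hasDerivAt_turningAngle (fun s ↦ ?_) (fun s ↦ ?_)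
    integral_same s
  · have := h.tension_pos s
    convert h.hasDerivAt_tangent s using 1
    rw [curveNormal, smul_smul, div_mul_div_cancel₀' (by positivity), div_self (by positivity),
      one_smul]
  · have := h.tension_pos s
    convert (h.hasDerivAt_tension_sq_smul_deriv_deriv s).const_smul (curveAngularMomentum ξ σ)⁻¹
      using 1
    · funext t
      simp only [curveNormal, Pi.smul_apply, smul_smul, div_eq_inv_mul]
    · rw [h.curvature_eq, smul_neg, smul_smul]
      congr 2
      field_simp

lemma curve_eq_neg_velocity (h : IsStationaryCurve ξ σ) (hp : 0 < p) (hper : Periodic ξ p)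
    (s : ℝ) :
    ξ s = -((orbitVelocity (curveAngularMomentum ξ σ) σ (deriv σ) (curveTurningAngle ξ σ) s).1 •
        deriv ξ 0 +
      (orbitVelocity (curveAngularMomentum ξ σ) σ (deriv σ) (curveTurningAngle ξ σ) s).2 •
        curveNormal ξ σ 0) := by
  have hc := h.angularMomentum_pos hp hper
  have hσ := h.tension_pos s
  have hnormal : σ s • deriv (deriv ξ) s =
      (curveAngularMomentum ξ σ / σ s) • curveNormal ξ σ s := by
    rw [curveNormal, smul_smul]
    congr 1
    field_simp
  obtain ⟨htangent, hnormal'⟩ := h.frame_eq hp hper s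
  rw [h.curve_eq s, hnormal, htangent, hnormal', orbitVelocity]
  module

lemma cos_turningAngle_period (h : IsStationaryCurve ξ σ) (hp : 0 < p) (hper : Periodic ξ p) :
    cos (curveTurningAngle ξ σ p) = 1 := by
  have hclosed : deriv ξ p = deriv ξ 0 := by simpa using periodic_deriv hper 0
  have hinner := h.inner_deriv_self 0
  nth_rewrite 2 [← hclosed] at hinner
  rw [(h.frame_eq hp hper p).1, inner_add_right, inner_smul_right, inner_smul_right, curveNormal,
    inner_smul_right, h.inner_deriv_self, h.inner_deriv_deriv_deriv] at hinner
  linarith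

lemma turningAngle_period (h : IsStationaryCurve ξ σ) (hp : 0 < p) (hper : Periodic ξ p)
    (hsimple : InjOn ξ (Ico 0 p)) : curveTurningAngle ξ σ p = 2 * π := by
  have horbit := h.isCentralOrbit hp hper
  have hzero : curveTurningAngle ξ σ 0 = 0 := integral_same
  have hpos : 0 < curveTurningAngle ξ σ p := hzero ▸ horbit.strictMono_angle hp
  have hle : curveTurningAngle ξ σ p ≤ 2 * π := by
    by_contra! hgt
    obtain ⟨u, w, huw, hwu, hvel⟩ := horbit.exists_velocity_eq (F := id)
      (fun x _ ↦ hasDerivAt_id x) (fun _ _ ↦ one_pos) hp (h.periodic_tension hp hper)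
      (by rwa [hzero, sub_zero])
    refine ne_of_injOn_Ico_of_periodic hp hper hsimple huw hwu ?_
    rw [h.curve_eq_neg_velocity hp hper u, h.curve_eq_neg_velocity hp hper w, hvel]
  refine hle.eq_of_not_lt fun hlt ↦ hpos.ne' ?_
  exact (cos_eq_one_iff_of_lt_of_lt (by linarith [pi_pos]) hlt).1
    (h.cos_turningAngle_period hp hper)

lemma deriv_tension_eq_zero (h : IsStationaryCurve ξ σ) (hp : 0 < p) (hper : Periodic ξ p)
    (hsimple : InjOn ξ (Ico 0 p)) (s : ℝ) : deriv σ s = 0 := by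
  have horbit := h.isCentralOrbit hp hper
  have hperσ := h.periodic_tension hp hper
  have hturn (s : ℝ) : curveTurningAngle ξ σ (s + p) = curveTurningAngle ξ σ s + 2 * π := by
    rw [horbit.angle_add_period hperσ, h.turningAngle_period hp hper hsimple, curveTurningAngle,
      curveTurningAngle, integral_same, sub_zero]
  obtain ⟨a, ha, hequil⟩ := horbit.exists_equilibrium (f' := fun _ ↦ 0)
    (fun x _ ↦ hasDerivAt_const x 1) (fun _ _ ↦ by norm_num) (fun _ _ ↦ by norm_num) hp hperσ hturn
  refine horbit.radialVelocity_eq_zero_of_equilibrium (F := id) (fun x _ ↦ hasDerivAt_id x)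
    (fun x (hx : 0 < x) y _ hxy ↦ ?_) ha hequil s
  dsimp only
  gcongr

lemma curvature_eq_of_simple (h : IsStationaryCurve ξ σ) (hp : 0 < p) (hper : Periodic ξ p)
    (hsimple : InjOn ξ (Ico 0 p)) (s : ℝ) : ‖deriv (deriv ξ) s‖ = 2 * π / p := by
  have hconst (t : ℝ) : σ t = σ s := (h.isCentralOrbit hp hper).radius_eq_of_radialVelocity_eq_zero
    (h.deriv_tension_eq_zero hp hper hsimple) t s
  have hturn := h.turningAngle_period hp hper hsimple
  simp only [curveTurningAngle, hconst, intervalIntegral.integral_const, sub_zero, smul_eq_mul]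
    at hturn
  rw [h.curvature_eq, eq_div_iff hp.ne', mul_comm, hturn]

lemma tension_mul_curvature_sq (h : IsStationaryCurve ξ σ) (hp : 0 < p) (hper : Periodic ξ p)
    (hsimple : InjOn ξ (Ico 0 p)) (s : ℝ) : σ s * ‖deriv (deriv ξ) s‖ ^ 2 = 1 := by
  have hsecond := (h.hasDerivAt_deriv_tension s).unique
    (funext (h.deriv_tension_eq_zero hp hper hsimple) ▸ hasDerivAt_const s (0 : ℝ))
  linarith

end IsStationaryCurve

theorem stmt15_general {E : Type*} [NormedAddCommGroup E] [InnerProductSpace ℝ E] {ξ : ℝ → E}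
    {σ : ℝ → ℝ} {p : ℝ} (h : IsStationaryCurve ξ σ) (hp : 0 < p) (hper : Periodic ξ p)
    (hsimple : InjOn ξ (Ico 0 p)) :
    (∀ s, σ s = (p / (2 * π)) ^ 2) ∧ ∀ s, ‖ξ s‖ = p / (2 * π) := by
  have hradius : 0 < p / (2 * π) := by positivity
  have htension (s : ℝ) : σ s = (p / (2 * π)) ^ 2 := by
    have := h.tension_mul_curvature_sq hp hper hsimple s
    rw [h.curvature_eq_of_simple hp hper hsimple] at this
    field_simp at this ⊢
    linarith
  refine ⟨htension, fun s ↦ (pow_left_inj₀ (norm_nonneg _) hradius.le two_ne_zero).1 ?_⟩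
  calc ‖ξ s‖ ^ 2 = σ s * (σ s * ‖deriv (deriv ξ) s‖ ^ 2) := by
        rw [h.norm_curve_sq, h.deriv_tension_eq_zero hp hper hsimple]; ring
    _ = (p / (2 * π)) ^ 2 := by
        rw [h.tension_mul_curvature_sq hp hper hsimple, mul_one, htension]

/-- Rigidity of stationary solutions: a simple closed stationary curve with
`∫σ ≥ (27/32)·(1/4π²)` is the circle of radius `1/(2π)` centered at the origin,
with `σ ≡ 1/(4π²)`. -/
theorem stmt15
    (ξ : ℝ → EuclideanSpace ℝ (Fin 2)) (σ : ℝ → ℝ)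
    (hξ : ContDiff ℝ 2 ξ) (hσ : ContDiff ℝ 2 σ)
    (hperξ : Function.Periodic ξ 1) (hperσ : Function.Periodic σ 1)
    (hσpos : ∀ s, 0 < σ s)
    (hspeed : ∀ s, ‖deriv ξ s‖ = 1)
    (hstat : ∀ s, deriv (fun r => σ r • deriv ξ r) s + ξ s = 0)
    (hmult : ∀ s, deriv (deriv σ) s - σ s * ‖deriv (deriv ξ) s‖ ^ 2 = -1)
    (hsimple : ∀ s₁ ∈ Set.Ico (0:ℝ) 1, ∀ s₂ ∈ Set.Ico (0:ℝ) 1, ξ s₁ = ξ s₂ → s₁ = s₂)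
    (hσlarge : (27/32) * (1 / (4 * π ^ 2)) ≤ ∫ s in (0:ℝ)..1, σ s) :
    (∀ s, σ s = 1 / (4 * π ^ 2)) ∧ (∀ s, ‖ξ s‖ = 1 / (2 * π)) := by
  have hcurve : IsStationaryCurve ξ σ :=
    { differentiable_deriv := (contDiff_succ_iff_deriv.1 hξ).2.2.differentiable_one
      differentiable_tension := hσ.differentiable two_ne_zero
      tension_pos := hσpos
      norm_deriv := hspeed
      deriv_add_eq_zero := hstat }
  obtain ⟨htension, hnorm⟩ := stmt15_general hcurve one_pos hperξ fun s hs t ht ↦ hsimple s hs t ht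
  exact ⟨fun s ↦ by rw [htension s]; ring, hnorm⟩
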